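/- Let (M_{a,b}) be a tower of matrix potentials on U, let r ∈ Mat_{m×m}(ℂ) and let l ≥ 1. Set N := (r z^{l−1} . M)_{0,0}, i.e. N = r·M_{l−1,0} − (−1)^{l−1}·M_{0,l−1}·r + Σ_{i+j=l−2, i,j≥0} (−1)^{i+1}·M_{0,i}·r·M_{j,0} (so N = r·M_{0,0} − M_{0,0}·r when l = 1). Then for every k ∈ {1,…,N}: ∂_k (r z^l . M)_{0,0} = N·(∂_k M_{0,0}) − (∂_k M_{0,0})·N. In particular, the differential of (r z^l . M)_{0,0} is a commutator with d M_{0,0}, so the infinitesimal upper-triangular action preserves the spectrum of d M_{0,0}. -/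

import Mathlib

/-!
Let `α(z) = 1 + ∑ M_{j,0} z^{j+1}` and `β(z) = 1 + ∑ (-1)^{i+1} M_{0,i} z^{i+1}`. Then
`(r z^l . M)_{0,0}` is the coefficient of `z^{l+1}` in `β r α`, the two terms outside the sum in its
definition being the ones that contain the constant term of `α` or of `β`. With
`D = ∂_k M_{0,0}`, the master equations read `∂_k α = z α D` and `∂_k β = -z D β`, so that
`∂_k (β r α) = z [β r α, D]`, and the theorem compares the coefficients of `z^{l+1}`.
-/


/-- The `k`-th partial derivative of a matrix-valued function on `ℝ^N`, entrywise. -/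
noncomputable def pderM {N m : ℕ} (k : Fin N)
    (M : (Fin N → ℝ) → Matrix (Fin m) (Fin m) ℂ) (x : Fin N → ℝ) :
    Matrix (Fin m) (Fin m) ℂ :=
  Matrix.of fun i j => fderiv ℝ (fun y => M y i j) x (Pi.single k 1)

/-- The infinitesimal upper-triangular (Givental-type) action of `r·z^l` on a family
`(M_{a,b})`: `(r z^l . M)_{a,b} = r·M_{a+l,b} − (−1)^l·M_{a,b+l}·r
+ Σ_{i+j=l−1, i,j≥0} (−1)^{i+1}·M_{a,i}·r·M_{j,b}`. -/
noncomputable def upAct {N m : ℕ} (r : Matrix (Fin m) (Fin m) ℂ) (l : ℕ)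
    (M : ℕ → ℕ → (Fin N → ℝ) → Matrix (Fin m) (Fin m) ℂ)
    (a b : ℕ) (x : Fin N → ℝ) : Matrix (Fin m) (Fin m) ℂ :=
  r * M (a + l) b x - (-1 : ℂ) ^ l • (M a (b + l) x * r)
    + ∑ i ∈ Finset.range l, (-1 : ℂ) ^ (i + 1) • (M a i x * r * M (l - 1 - i) b x)

/-- The coefficient of `z ^ n` in `b(z) * r * a(z)`, where the sequences `b` and `a` stand for the
formal power series with these coefficients. -/
def sandwichCoeff {R : Type*} [Semiring R] (r : R) (b a : ℕ → R) (n : ℕ) : R :=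
  ∑ p ∈ Finset.HasAntidiagonal.antidiagonal n, b p.1 * r * a p.2

/-- The coefficients of the series `1 + ∑ M_{j,0} z^{j+1}`, which collects the factors to the right
of `r` in `(r z^l . M)_{0,0}`. -/
def rightSeries {R : Type*} [One R] (M : ℕ → ℕ → R) : ℕ → R
  | 0 => 1
  | j + 1 => M j 0

/-- The coefficients of the series `1 + ∑ (-1)^{i+1} M_{0,i} z^{i+1}`, which collects the factors to
the left of `r` in `(r z^l . M)_{0,0}`, together with their signs. -/
def leftSeries {R : Type*} [Ring R] (M : ℕ → ℕ → R) : ℕ → R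
  | 0 => 1
  | i + 1 => (-1) ^ (i + 1) * M 0 i

theorem sandwichCoeff_succ_eq_mul_const {R : Type*} [Semiring R] {a a' : ℕ → R} {D : R}
    (r : R) (b : ℕ → R) (h_zero : a' 0 = 0) (h_succ : ∀ j, a' (j + 1) = a j * D) (n : ℕ) :
    sandwichCoeff r b a' (n + 1) = sandwichCoeff r b a n * D := by
  simp [sandwichCoeff, Finset.Nat.sum_antidiagonal_succ', h_zero, h_succ, Finset.sum_mul, mul_assoc]

theorem sandwichCoeff_succ_eq_const_mul {R : Type*} [Semiring R] {b b' : ℕ → R} {D : R}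
    (r : R) (a : ℕ → R) (h_zero : b' 0 = 0) (h_succ : ∀ i, b' (i + 1) = D * b i) (n : ℕ) :
    sandwichCoeff r b' a (n + 1) = D * sandwichCoeff r b a n := by
  simp [sandwichCoeff, Finset.Nat.sum_antidiagonal_succ, h_zero, h_succ, Finset.mul_sum, mul_assoc]

theorem upAct_zero_zero_eq_sandwichCoeff {N m : ℕ} (r : Matrix (Fin m) (Fin m) ℂ) (l : ℕ)
    (M : ℕ → ℕ → (Fin N → ℝ) → Matrix (Fin m) (Fin m) ℂ) (x : Fin N → ℝ) :
    upAct r l M 0 0 x =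
      sandwichCoeff r (leftSeries (M · · x)) (rightSeries (M · · x)) (l + 1) := by
  have hsign (n : ℕ) (A : Matrix (Fin m) (Fin m) ℂ) : (-1 : ℂ) ^ n • A = (-1) ^ n * A := by
    rw [Algebra.smul_def, map_pow, map_neg, map_one]
  have hinner : ∀ i ∈ Finset.range l,
      leftSeries (M · · x) (i + 1) * r * rightSeries (M · · x) (l + 1 - (i + 1)) =
        (-1 : ℂ) ^ (i + 1) • (M 0 i x * r * M (l - 1 - i) 0 x) := by
    intro i hi
    have hindex : l + 1 - (i + 1) = l - 1 - i + 1 := by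
      have := Finset.mem_range.mp hi
      omega
    simp only [hindex, leftSeries, rightSeries, hsign, mul_assoc]
  rw [sandwichCoeff, Finset.Nat.sum_antidiagonal_eq_sum_range_succ_mk, Finset.sum_range_succ',
    Finset.sum_range_succ, Finset.sum_congr rfl hinner]
  simp only [upAct, leftSeries, rightSeries, hsign, zero_add, Nat.sub_self, Nat.sub_zero, one_mul,
    mul_one, pow_succ, mul_neg, neg_mul, mul_assoc]
  abel

section Calculus

variable {𝕜 E R : Type*} [NontriviallyNormedField 𝕜] [NormedAddCommGroup E] [NormedSpace 𝕜 E]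
  [NormedRing R] [NormedAlgebra 𝕜 R] {x v : E}

section Sandwich

variable {a b : ℕ → E → R}

theorem differentiableAt_sandwichCoeff (r : R) (hb : ∀ i, DifferentiableAt 𝕜 (b i) x)
    (ha : ∀ j, DifferentiableAt 𝕜 (a j) x) (n : ℕ) :
    DifferentiableAt 𝕜 (fun y => sandwichCoeff r (b · y) (a · y) n) x :=
  DifferentiableAt.fun_sum fun p _ => ((hb p.1).mul_const r).mul (ha p.2)

theorem fderiv_sandwichCoeff_apply (r : R) (hb : ∀ i, DifferentiableAt 𝕜 (b i) x)
    (ha : ∀ j, DifferentiableAt 𝕜 (a j) x) (n : ℕ) :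
    fderiv 𝕜 (fun y => sandwichCoeff r (b · y) (a · y) n) x v =
      sandwichCoeff r (b · x) (fun j => fderiv 𝕜 (a j) x v) n +
        sandwichCoeff r (fun i => fderiv 𝕜 (b i) x v) (a · x) n := by
  have hbr (i : ℕ) : DifferentiableAt 𝕜 (fun y => b i y * r) x := (hb i).mul_const r
  simp only [sandwichCoeff]
  rw [fderiv_fun_sum fun p _ => (hbr p.1).mul (ha p.2)]
  simp [fderiv_fun_mul' (hbr _) (ha _), fderiv_mul_const' (hb _), Finset.sum_add_distrib]

theorem fderiv_sandwichCoeff_succ_eq_commutator {D : R} (r : R)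
    (hb : ∀ i, DifferentiableAt 𝕜 (b i) x) (ha : ∀ j, DifferentiableAt 𝕜 (a j) x)
    (hb_zero : fderiv 𝕜 (b 0) x v = 0) (ha_zero : fderiv 𝕜 (a 0) x v = 0)
    (hb_succ : ∀ i, fderiv 𝕜 (b (i + 1)) x v = -D * b i x)
    (ha_succ : ∀ j, fderiv 𝕜 (a (j + 1)) x v = a j x * D) (n : ℕ) :
    fderiv 𝕜 (fun y => sandwichCoeff r (b · y) (a · y) (n + 1)) x v =
      sandwichCoeff r (b · x) (a · x) n * D - D * sandwichCoeff r (b · x) (a · x) n := by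
  rw [fderiv_sandwichCoeff_apply r hb ha, sandwichCoeff_succ_eq_mul_const r _ ha_zero ha_succ,
    sandwichCoeff_succ_eq_const_mul r _ hb_zero hb_succ, neg_mul, sub_eq_add_neg]

end Sandwich

section Series

variable {M : ℕ → ℕ → E → R}

theorem differentiableAt_rightSeries (hM : ∀ j, DifferentiableAt 𝕜 (M j 0) x) :
    ∀ n, DifferentiableAt 𝕜 (fun y => rightSeries (M · · y) n) x
  | 0 => differentiableAt_const 1
  | j + 1 => hM j

theorem differentiableAt_leftSeries (hM : ∀ i, DifferentiableAt 𝕜 (M 0 i) x) :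
    ∀ n, DifferentiableAt 𝕜 (fun y => leftSeries (M · · y) n) x
  | 0 => differentiableAt_const 1
  | i + 1 => (hM i).const_mul _

theorem fderiv_rightSeries_succ
    (hM : ∀ j, fderiv 𝕜 (M (j + 1) 0) x v = M j 0 x * fderiv 𝕜 (M 0 0) x v) :
    ∀ n, fderiv 𝕜 (fun y => rightSeries (M · · y) (n + 1)) x v =
      rightSeries (M · · x) n * fderiv 𝕜 (M 0 0) x v
  | 0 => (one_mul _).symm
  | j + 1 => hM j

theorem fderiv_leftSeries_succ (hdiff : ∀ i, DifferentiableAt 𝕜 (M 0 i) x)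
    (hM : ∀ i, fderiv 𝕜 (M 0 (i + 1)) x v = fderiv 𝕜 (M 0 0) x v * M 0 i x) (n : ℕ) :
    fderiv 𝕜 (fun y => leftSeries (M · · y) (n + 1)) x v =
      -fderiv 𝕜 (M 0 0) x v * leftSeries (M · · x) n := by
  cases n with
  | zero => simp [leftSeries]
  | succ i =>
    have hcomm : Commute ((-1) ^ (i + 1)) (fderiv 𝕜 (M 0 0) x v) :=
      (Commute.neg_one_left _).pow_left _
    calc fderiv 𝕜 (fun y => leftSeries (M · · y) (i + 1 + 1)) x v
        = (-1) ^ (i + 1 + 1) * fderiv 𝕜 (M 0 (i + 1)) x v := by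
          simp [leftSeries, fderiv_const_mul (hdiff (i + 1))]
      _ = -((-1) ^ (i + 1) * (fderiv 𝕜 (M 0 0) x v * M 0 i x)) := by
          rw [hM, pow_succ, mul_neg_one, neg_mul]
      _ = -fderiv 𝕜 (M 0 0) x v * leftSeries (M · · x) (i + 1) := by
          rw [hcomm.left_comm, leftSeries, neg_mul]

end Series

end Calculus

theorem differentiableAt_matrix {𝕜 E α ι κ : Type*} [NontriviallyNormedField 𝕜]
    [NormedAddCommGroup E] [NormedSpace 𝕜 E] [NormedAddCommGroup α] [NormedSpace 𝕜 α] [Finite ι]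
    [Finite κ] {F : E → Matrix ι κ α} {x : E} :
    DifferentiableAt 𝕜 F x ↔ ∀ i j, DifferentiableAt 𝕜 (fun y => F y i j) x := by
  cases nonempty_fintype ι
  cases nonempty_fintype κ
  exact (differentiableAt_pi (F' := fun _ => κ → α)).trans <|
    forall_congr' fun _ => differentiableAt_pi

theorem pderM_eq_fderiv {N m : ℕ} {F : (Fin N → ℝ) → Matrix (Fin m) (Fin m) ℂ} {x : Fin N → ℝ}
    (hF : DifferentiableAt ℝ F x) (k : Fin N) :
    pderM k F x = fderiv ℝ F x (Pi.single k 1) := by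
  ext i j
  have hentry := hasFDerivAt_pi'.1 (hasFDerivAt_pi'.1 hF.hasFDerivAt i) j
  rw [pderM, Matrix.of_apply, hentry.fderiv]
  rfl

-- `fderiv` on matrices refers only to their topology; a submultiplicative norm enters here because
-- the product rule is stated for normed algebras.
open scoped Matrix.Norms.Operator in
theorem upper_triangular_action_differential_is_commutator_general {N m : ℕ} {x : Fin N → ℝ}
    {M : ℕ → ℕ → (Fin N → ℝ) → Matrix (Fin m) (Fin m) ℂ} {k : Fin N}
    (hleft : ∀ b i j, DifferentiableAt ℝ (fun y => M 0 b y i j) x)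
    (hright : ∀ a i j, DifferentiableAt ℝ (fun y => M a 0 y i j) x)
    (hME1 : ∀ a, pderM k (M (a + 1) 0) x = M a 0 x * pderM k (M 0 0) x)
    (hME2 : ∀ b, pderM k (M 0 (b + 1)) x = pderM k (M 0 0) x * M 0 b x)
    (r : Matrix (Fin m) (Fin m) ℂ) (l : ℕ) :
    pderM k (upAct r (l + 1) M 0 0) x =
      upAct r l M 0 0 x * pderM k (M 0 0) x - pderM k (M 0 0) x * upAct r l M 0 0 x := by
  have hdl (b : ℕ) : DifferentiableAt ℝ (M 0 b) x := differentiableAt_matrix.2 (hleft b)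
  have hdr (a : ℕ) : DifferentiableAt ℝ (M a 0) x := differentiableAt_matrix.2 (hright a)
  have hl := differentiableAt_leftSeries hdl
  have hr := differentiableAt_rightSeries hdr
  simp only [pderM_eq_fderiv (hdl _), pderM_eq_fderiv (hdr _)] at hME1 hME2 ⊢
  rw [funext (upAct_zero_zero_eq_sandwichCoeff r (l + 1) M), upAct_zero_zero_eq_sandwichCoeff,
    pderM_eq_fderiv (differentiableAt_sandwichCoeff r hl hr _)]
  exact fderiv_sandwichCoeff_succ_eq_commutator r hl hr (by simp [leftSeries])
    (by simp [rightSeries]) (fderiv_leftSeries_succ hdl hME2) (fderiv_rightSeries_succ hME1) _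

/-- For a tower of matrix potentials, with `N := (r z^{l−1}.M)_{0,0}`, the differential
of `(r z^l.M)_{0,0}` is the commutator `[N, dM_{0,0}]`; hence the infinitesimal
upper-triangular action preserves the spectrum of `dM_{0,0}`. -/
theorem upper_triangular_action_differential_is_commutator
    {m N : ℕ} (hm : 1 ≤ m) (hN : 1 ≤ N)
    (U : Set (Fin N → ℝ)) (hU : IsOpen U)
    (M : ℕ → ℕ → (Fin N → ℝ) → Matrix (Fin m) (Fin m) ℂ)
    (hsmooth : ∀ a b : ℕ, ∀ i j : Fin m, ContDiffOn ℝ 1 (fun x => M a b x i j) U)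
    (hME1 : ∀ a b : ℕ, ∀ k : Fin N, ∀ x ∈ U,
      pderM k (M (a + 1) b) x = M a 0 x * pderM k (M 0 b) x)
    (hME2 : ∀ a b : ℕ, ∀ k : Fin N, ∀ x ∈ U,
      pderM k (M a (b + 1)) x = pderM k (M a 0) x * M 0 b x)
    (hME3 : ∀ a b : ℕ, ∀ x ∈ U,
      M (a + 1) b x + M a (b + 1) x = M a 0 x * M 0 b x)
    (r : Matrix (Fin m) (Fin m) ℂ) (l : ℕ) (hl : 1 ≤ l)
    (Nmat : (Fin N → ℝ) → Matrix (Fin m) (Fin m) ℂ)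
    (hNmat : ∀ x, Nmat x = upAct r (l - 1) M 0 0 x) :
    ∀ k : Fin N, ∀ x ∈ U,
      pderM k (upAct r l M 0 0) x
        = Nmat x * pderM k (M 0 0) x - pderM k (M 0 0) x * Nmat x := by
  intro k x hx
  obtain ⟨n, rfl⟩ := Nat.exists_eq_add_of_le' hl
  have hdiff (a b : ℕ) (i j : Fin m) : DifferentiableAt ℝ (fun y => M a b y i j) x :=
    ((hsmooth a b i j).contDiffAt (hU.mem_nhds hx)).differentiableAt one_ne_zero
  simpa only [hNmat, Nat.add_sub_cancel] using
    upper_triangular_action_differential_is_commutator_general (hdiff 0) (hdiff · 0)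
      (hME1 · 0 k x hx) (hME2 0 · k x hx) r n
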